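/- arXiv:2211.01220 — 2 statements merged into one kernel-verified Lean document; each statement's English description precedes it below -/
import Mathlib

section
/- For every K ≥ 2 and every prime power q, there exist a positive integer L (a multiple of (K−1)!), finitely-valued random variables: i.i.d. uniform inputs W_1,…,W_K over F_q^L, keys Z_1,…,Z_K each taking values in F_q^{L_Z} with L_Z = Σ_{n=1}^{K−1} L/n, keys independent of inputs, and for every subset U ⊆ [K] and every k ∈ U a message X_k^U that is a deterministic function of (W_k, Z_k), such that correctness H(Σ_{k∈U} W_k | (X_k^U)_{k∈U}) = 0 and security I((W_k)_{k∈U}; (X_k^U)_{k∈U} | Σ_{k∈U} W_k) = 0 hold for every subset U ⊆ [K]. Consequently the key rate R_Z = L_Z/L = 1 + 1/2 + ⋯ + 1/(K−1) is achievable for K-user secure summation with arbitrary user selection (achievability part of Theorem 2). -/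
/-!
The scheme is one-time padding: user `k ∈ U` sends `W_k + S_k^U`, where the masks `S_k^U` are
computed from the keys, sum to zero over `U`, and are otherwise uniform. Correctness and security
are then entropy counts for homomorphisms on a uniform finite group (`scheme_correct`,
`scheme_secure`), and the point is to get such masks for all `U` at once from short keys.

Take `L = K!`. For each set `T` of `t ≥ 2` users draw `L (t - 2)! (K - t)! / (K - 1)!` independent
uniform key symbols and give them to exactly the users in `T`. Each user then holds
`∑ n ∈ [1, K - 1], L / n` symbols (`sum_mult_mem`). The multiplicities are Beta integrals and obey
a Pascal rule, so that intersecting the sets `T` with `U` gives the multiplicities of the same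
scheme for the users in `U` alone (`sum_shareFrac_powerset`).

For fixed `U`, choose a root in `U` for each coordinate, every user equally often, and join the
root to all other users of `U`. A key symbol known to both ends of such an edge can be added by
one end and subtracted by the other. If all edges in all coordinates use distinct symbols, the
masks are uniform on zero-sum tuples (`exists_noise`). The assignment of distinct symbols exists
by Hall's theorem: sharing each symbol equally among the edges it fits is a fractional matching
that saturates every edge (`exists_slots`).
-/

open scoped BigOperators

open Classical in
/-- The probability that the finitely-valued random variable `X` takes the value `s`,
under the probability weights `μ` on the finite sample space `Ω`. -/
noncomputable def probOf {Ω S : Type*} [Fintype Ω] (μ : Ω → ℝ) (X : Ω → S) (s : S) : ℝ :=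
  ∑ ω ∈ Finset.univ.filter (fun ω => X ω = s), μ ω

/-- Shannon entropy (in bits) of a finitely-valued random variable. -/
noncomputable def Hent {Ω S : Type*} [Fintype Ω] [Fintype S] (μ : Ω → ℝ) (X : Ω → S) : ℝ :=
  - ∑ s : S, probOf μ X s * Real.logb 2 (probOf μ X s)

/-- Conditional entropy H(X | Y) (in bits). -/
noncomputable def Hcond {Ω S T : Type*} [Fintype Ω] [Fintype S] [Fintype T]
    (μ : Ω → ℝ) (X : Ω → S) (Y : Ω → T) : ℝ :=
  Hent μ (fun ω => (X ω, Y ω)) - Hent μ Y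

/-- Mutual information I(X ; Y) (in bits). -/
noncomputable def MI {Ω S T : Type*} [Fintype Ω] [Fintype S] [Fintype T]
    (μ : Ω → ℝ) (X : Ω → S) (Y : Ω → T) : ℝ :=
  Hent μ X + Hent μ Y - Hent μ (fun ω => (X ω, Y ω))

/-- Conditional mutual information I(X ; Y | Z) (in bits). -/
noncomputable def CMI {Ω S T U : Type*} [Fintype Ω] [Fintype S] [Fintype T] [Fintype U]
    (μ : Ω → ℝ) (X : Ω → S) (Y : Ω → T) (Z : Ω → U) : ℝ :=
  Hcond μ X Z - Hcond μ X (fun ω => (Y ω, Z ω))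

/-! ### The number of key symbols per set of users -/

open Nat in
/-- The Beta integral `∫₀¹ p ^ a * (1 - p) ^ b dp = a! b! / (a + b + 1)!`. For a set `T` of `t`
among `K` users, `shareFrac (t - 2) (K - t)` is the fraction of the `L` symbols that is shared
by exactly the users in `T`. -/
noncomputable def shareFrac (a b : ℕ) : ℚ := (a ! * b ! : ℚ) / (a + b + 1)!

open Nat in
lemma shareFrac_pascal (a b : ℕ) :
    shareFrac a (b + 1) + shareFrac (a + 1) b = shareFrac a b := by
  have h1 : a + 1 + b + 1 = a + b + 1 + 1 := by ring
  have h2 : a + (b + 1) + 1 = a + b + 1 + 1 := by ring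
  unfold shareFrac
  rw [h1, h2, Nat.factorial_succ (a + b + 1), Nat.factorial_succ a, Nat.factorial_succ b]
  have h : ((a + b + 1)! : ℚ) ≠ 0 := by exact_mod_cast Nat.factorial_ne_zero _
  have h' : (a + b + 1 + 1 : ℚ) ≠ 0 := by positivity
  push_cast
  field_simp
  ring

/-- The sets `T` with a prescribed intersection with `U` jointly carry the share that this
intersection has in the scheme for the users in `U` alone: dropping the users in `A` turns the
scheme into that for fewer users. -/
lemma sum_shareFrac_powerset {ι : Type*} [DecidableEq ι] (A : Finset ι) (a b : ℕ) :
    ∑ B ∈ A.powerset, shareFrac (a + B.card) (b + (A.card - B.card)) = shareFrac a b := by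
  induction A using Finset.induction_on with
  | empty => simp
  | insert x A hx ih =>
    rw [Finset.sum_powerset_insert hx, ← Finset.sum_add_distrib, ← ih]
    refine Finset.sum_congr rfl fun B hB => ?_
    have hBA := Finset.mem_powerset.1 hB
    have hc := Finset.card_le_card hBA
    rw [Finset.card_insert_of_notMem hx, Finset.card_insert_of_notMem (fun h => hx (hBA h)),
      ← shareFrac_pascal (a + B.card) (b + (A.card - B.card))]
    have h1 : b + (A.card + 1 - B.card) = b + (A.card - B.card) + 1 := by omega
    have h2 : A.card + 1 - (B.card + 1) = A.card - B.card := by omega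
    rw [h1, h2, ← add_assoc]

open Nat in
lemma sum_shareFrac_div {ι : Type*} (A : Finset ι) :
    ∑ R ∈ A.powerset,
        shareFrac R.card (A.card - R.card) / ((R.card + 2 : ℚ) * (R.card + 1))
      = 1 / (A.card + 2) := by
  rw [Finset.sum_powerset_apply_card
    (fun m => shareFrac m (A.card - m) / ((m + 2 : ℚ) * (m + 1)))]
  -- the sum telescopes, as `1 / ((m + 1) (m + 2))` is a difference
  have key : ∀ m ∈ Finset.range (A.card + 1),
      A.card.choose m • (shareFrac m (A.card - m) / ((m + 2 : ℚ) * (m + 1)))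
        = 1 / (A.card + 1 : ℚ) * (1 / (m + 1 : ℚ) - 1 / ((m + 1 : ℕ) + 1 : ℚ)) := by
    intro m hm
    have hm' : m ≤ A.card := by simpa [Nat.lt_succ_iff] using hm
    have h1 : ((A.card.choose m * m ! * (A.card - m)! : ℕ) : ℚ) = (A.card ! : ℕ) := by
      rw [Nat.choose_mul_factorial_mul_factorial hm']
    have h2 : m + (A.card - m) + 1 = A.card + 1 := by omega
    have h3 : (A.card ! : ℚ) ≠ 0 := by exact_mod_cast Nat.factorial_ne_zero _
    unfold shareFrac
    rw [h2, Nat.factorial_succ, nsmul_eq_mul]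
    push_cast at h1 ⊢
    have h4 : (m + 1 : ℚ) ≠ 0 := by positivity
    have h5 : (m + 1 + 1 : ℚ) = m + 2 := by ring
    have h6 : (A.card + 1 : ℚ) ≠ 0 := by positivity
    have h7 : (m + 2 : ℚ) ≠ 0 := by positivity
    rw [h5]
    field_simp
    linear_combination h1
  rw [Finset.sum_congr rfl key, ← Finset.mul_sum,
    Finset.sum_range_sub' (fun m : ℕ => 1 / (m + 1 : ℚ))]
  have h6 : (A.card + 1 : ℚ) ≠ 0 := by positivity
  have h7 : (A.card + 2 : ℚ) ≠ 0 := by positivity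
  have h8 : (A.card + 1 + 1 : ℚ) ≠ 0 := by positivity
  push_cast
  field_simp
  ring

/-- The number of key symbols shared by exactly the users in a given set of `t` among `K`
users, for input length `L = K!`. Singletons and the empty set share nothing. -/
def mult (K t : ℕ) : ℕ := if 2 ≤ t then K * ((t - 2).factorial * (K - t).factorial) else 0

lemma mult_eq_shareFrac {K t : ℕ} (ht : 2 ≤ t) (htK : t ≤ K) :
    (mult K t : ℚ) = K.factorial * shareFrac (t - 2) (K - t) := by
  have h : t - 2 + (K - t) + 1 = K - 1 := by omega
  have h3 : ((K - 1).factorial : ℚ) ≠ 0 := by exact_mod_cast Nat.factorial_ne_zero _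
  rw [mult, if_pos ht, shareFrac, h, ← Nat.mul_factorial_pred (by omega : K ≠ 0)]
  push_cast
  field_simp

/-- The size of a user's key: the sets containing `k` with `m` further users contribute
`K! / m` symbols in total. -/
lemma sum_mult_mem (K : ℕ) (k : Fin K) :
    ∑ T : {T : Finset (Fin K) // k ∈ T}, mult K T.1.card
      = ∑ n ∈ Finset.Icc 1 (K - 1), K.factorial / n := by
  classical
  have hK : 0 < K := k.pos
  have h1 : ∑ T : {T : Finset (Fin K) // k ∈ T}, mult K T.1.card
      = ∑ B ∈ (Finset.univ.erase k).powerset, mult K (B.card + 1) := by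
    symm
    refine Finset.sum_bij (fun B _ => ⟨insert k B, Finset.mem_insert_self _ _⟩) (by simp) ?_ ?_ ?_
    · intro B hB B' hB' h
      have hB := Finset.mem_powerset.1 hB
      have hB' := Finset.mem_powerset.1 hB'
      have h := congrArg Subtype.val h
      dsimp only at h
      rw [← Finset.erase_insert (fun h => by simpa using hB h : k ∉ B), h,
        Finset.erase_insert (fun h => by simpa using hB' h : k ∉ B')]
    · rintro ⟨T, hT⟩ -
      refine ⟨T.erase k, ?_, ?_⟩
      · exact Finset.mem_powerset.2 (Finset.erase_subset_erase _ (Finset.subset_univ _))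
      · simp [Finset.insert_erase hT]
    · intro B hB
      have hB := Finset.mem_powerset.1 hB
      rw [Finset.card_insert_of_notMem (fun h => by simpa using hB h : k ∉ B)]
  rw [h1, Finset.sum_powerset_apply_card (fun m => mult K (m + 1))]
  have hc : (Finset.univ.erase k : Finset (Fin K)).card = K - 1 := by simp
  rw [hc, Finset.sum_range_succ', mult, if_neg (by norm_num), smul_zero, add_zero,
    show Finset.Icc 1 (K - 1) = Finset.Ico 1 K by ext; simp; omega, Finset.sum_Ico_eq_sum_range]
  refine Finset.sum_congr rfl fun m hm => ?_
  have hm' : m < K - 1 := by simpa using hm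
  rw [mult, if_pos (by omega)]
  symm
  refine Nat.div_eq_of_eq_mul_left (by omega) ?_
  rw [add_comm 1 m, ← Nat.mul_factorial_pred hK.ne',
    ← Nat.choose_mul_factorial_mul_factorial (by omega : m + 1 ≤ K - 1), Nat.factorial_succ]
  have h2 : m + 1 + 1 - 2 = m := by omega
  have h3 : K - (m + 1 + 1) = K - 1 - (m + 1) := by omega
  rw [h2, h3, smul_eq_mul]
  ring

/-! ### Distributing the key symbols over the coordinates -/

/-- The fractional matching of `exists_slots` saturates every slot. -/
lemma sum_mult_div {K : ℕ} (U : Finset (Fin K)) {r v : Fin K} (hr : r ∈ U) (hv : v ∈ U)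
    (hrv : r ≠ v) :
    ∑ T : Finset (Fin K) with r ∈ T ∧ v ∈ T,
        (mult K T.card : ℚ) / ((T ∩ U).card * ((T ∩ U).card - 1))
      = K.factorial / U.card := by
  set A : Finset (Fin K) := U \ {r, v} with hA
  have hAc : A.card + 2 = U.card := by
    have h : ({r, v} : Finset (Fin K)) ⊆ U := by
      intro x hx
      rcases Finset.mem_insert.1 hx with rfl | hx
      · exact hr
      · rwa [Finset.mem_singleton.1 hx]
    rw [← Finset.card_sdiff_add_card_eq_card h, Finset.card_pair hrv]
  have hUc : U.card + Uᶜ.card = K := by simp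
  have h1 : ∑ T : Finset (Fin K) with r ∈ T ∧ v ∈ T,
        (mult K T.card : ℚ) / ((T ∩ U).card * ((T ∩ U).card - 1))
      = ∑ p ∈ A.powerset ×ˢ Uᶜ.powerset, K.factorial *
          shareFrac (p.1.card + p.2.card) (A.card - p.1.card + (Uᶜ.card - p.2.card)) /
          ((p.1.card + 2 : ℚ) * (p.1.card + 1)) := by
    refine Finset.sum_bij' (fun T _ => ((T ∩ U) \ {r, v}, T \ U))
      (fun p _ => {r, v} ∪ (p.1 ∪ p.2)) ?_ ?_ ?_ ?_ ?_
    · intro T hT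
      simp only [Finset.mem_product, Finset.mem_powerset, hA]
      exact ⟨Finset.sdiff_subset_sdiff Finset.inter_subset_right subset_rfl,
        fun x hx => by simpa using (Finset.mem_sdiff.1 hx).2⟩
    · intro p hp
      simp
    · intro T hT
      simp only [Finset.mem_filter, Finset.mem_univ, true_and] at hT
      ext x
      simp only [Finset.mem_union, Finset.mem_insert, Finset.mem_singleton, Finset.mem_sdiff,
        Finset.mem_inter]
      by_cases hxr : x = r
      · subst hxr; simp [hT.1]
      by_cases hxv : x = v
      · subst hxv; simp [hT.2]
      simp only [hxr, hxv]
      tauto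
    · rintro ⟨R, B⟩ hp
      simp only [Finset.mem_product, Finset.mem_powerset, hA] at hp
      have hR : ∀ x ∈ R, x ∈ U ∧ x ≠ r ∧ x ≠ v := fun x hx => by simpa using hp.1 hx
      have hB : ∀ x ∈ B, x ∉ U := fun x hx => by simpa using hp.2 hx
      refine Prod.ext ?_ ?_
      · ext x
        have := hR x
        have := hB x
        simp only [Finset.mem_union, Finset.mem_insert, Finset.mem_singleton, Finset.mem_sdiff,
          Finset.mem_inter]
        tauto
      · ext x
        have := hR x
        have := hB x
        simp only [Finset.mem_union, Finset.mem_insert, Finset.mem_singleton, Finset.mem_sdiff]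
        constructor
        · rintro ⟨(rfl | rfl) | h, h'⟩ <;> tauto
        · tauto
    · intro T hT
      simp only [Finset.mem_filter, Finset.mem_univ, true_and] at hT
      have hsub : ({r, v} : Finset (Fin K)) ⊆ T ∩ U := by
        intro x hx
        rcases Finset.mem_insert.1 hx with rfl | hx
        · exact Finset.mem_inter.2 ⟨hT.1, hr⟩
        · rw [Finset.mem_singleton.1 hx]
          exact Finset.mem_inter.2 ⟨hT.2, hv⟩
      have e1 : ((T ∩ U) \ {r, v}).card + 2 = (T ∩ U).card := by
        rw [← Finset.card_sdiff_add_card_eq_card hsub, Finset.card_pair hrv]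
      have e2 : (T \ U).card + (T ∩ U).card = T.card := Finset.card_sdiff_add_card_inter T U
      have e3 : (T ∩ U).card ≤ U.card := Finset.card_le_card Finset.inter_subset_right
      have e4 : (T \ U).card ≤ Uᶜ.card :=
        Finset.card_le_card fun x hx => by simpa using (Finset.mem_sdiff.1 hx).2
      rw [mult_eq_shareFrac (by omega) (by omega), ← e1]
      have e5 : T.card - 2 = ((T ∩ U) \ {r, v}).card + (T \ U).card := by omega
      have e6 : K - T.card = A.card - ((T ∩ U) \ {r, v}).card + (Uᶜ.card - (T \ U).card) := by
        omega
      rw [e5, e6]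
      push_cast
      congr 2
      ring
  rw [h1, Finset.sum_product]
  have h2 : ∀ R ∈ A.powerset, ∑ B ∈ Uᶜ.powerset, (K.factorial : ℚ) *
          shareFrac (R.card + B.card) (A.card - R.card + (Uᶜ.card - B.card)) /
          ((R.card + 2 : ℚ) * (R.card + 1))
        = K.factorial *
          (shareFrac R.card (A.card - R.card) / ((R.card + 2 : ℚ) * (R.card + 1))) := by
    intro R _
    rw [← Finset.sum_div, ← Finset.mul_sum, sum_shareFrac_powerset, mul_div_assoc]
  rw [Finset.sum_congr rfl h2, ← Finset.mul_sum, sum_shareFrac_div, ← hAc]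
  push_cast
  ring

/-- Hall's theorem from a fractional matching in which each `b` uses the same weight `w b` on all
its edges. -/
lemma exists_injective_of_weights {α β : Type*} [Fintype α] [Fintype β] [DecidableEq β]
    (t : α → Finset β) (w : β → ℚ) (hw : ∀ b, 0 ≤ w b)
    (hrow : ∀ a, 1 ≤ ∑ b ∈ t a, w b)
    (hcol : ∀ b, ∑ a with b ∈ t a, w b ≤ 1) :
    ∃ f : α → β, Function.Injective f ∧ ∀ a, f a ∈ t a := by
  classical
  refine (Finset.all_card_le_biUnion_card_iff_exists_injective t).1 fun A => ?_
  have : (A.card : ℚ) ≤ ((A.biUnion t).card : ℚ) := by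
    calc (A.card : ℚ) = ∑ a ∈ A, 1 := by simp
      _ ≤ ∑ a ∈ A, ∑ b ∈ t a, w b := Finset.sum_le_sum fun a _ => hrow a
      _ = ∑ b ∈ A.biUnion t, ∑ a ∈ A with b ∈ t a, w b := by
          refine Finset.sum_comm' fun a b => ?_
          simp only [Finset.mem_biUnion, Finset.mem_filter]
          exact ⟨fun h => ⟨h, a, h⟩, fun h => h.1⟩
      _ ≤ ∑ b ∈ A.biUnion t, 1 := by
          refine Finset.sum_le_sum fun b _ => le_trans ?_ (hcol b)
          exact Finset.sum_le_sum_of_subset_of_nonneg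
            (Finset.filter_subset_filter _ (Finset.subset_univ _)) fun _ _ _ => hw b
      _ = _ := by simp
  exact_mod_cast this

/-- The key symbols: a set `T` of users and one of the `mult K T.card` symbols known to exactly
the users in `T`. -/
abbrev KeySym (K : ℕ) : Type := Σ T : Finset (Fin K), Fin (mult K T.card)

/-- The slots of a set `U` of users with roots `r`: a coordinate `l` and a user `v ∈ U` other
than the root `r l` of the coordinate. For fixed `l` they are the edges of the star on `U`
centred at `r l`. -/
abbrev Slot {K L : ℕ} (U : Finset (Fin K)) (r : Fin L → Fin K) : Type :=
  {p : Fin L × Fin K // p.2 ∈ U ∧ p.2 ≠ r p.1}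

/-- All slots can be given distinct key symbols, each known to both ends of the slot's edge.
Every user of `U` is the root of equally many coordinates `m = K! / |U|`. A symbol known to
`s ≥ 2` users of `U` then fits `m s (s - 1)` slots; splitting it equally among them is a
fractional matching, by `sum_mult_div`, and Hall's theorem applies. -/
lemma exists_slots {K : ℕ} (U : Finset (Fin K)) (hU : U.Nonempty) :
    ∃ r : Fin K.factorial → Fin K, (∀ l, r l ∈ U) ∧
      ∃ c : Slot U r → KeySym K, Function.Injective c ∧
        ∀ s, r s.1.1 ∈ (c s).1 ∧ s.1.2 ∈ (c s).1 := by
  classical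
  have hUpos : 0 < U.card := hU.card_pos
  have hUK : U.card ≤ K := by simpa using Finset.card_le_univ U
  obtain ⟨m, hm⟩ : U.card ∣ K.factorial := Nat.dvd_factorial hUpos hUK
  have E : Fin K.factorial ≃ U × Fin m := Fintype.equivOfCardEq (by simp [hm])
  set r : Fin K.factorial → Fin K := fun l => (E l).1.1 with hr
  have hrU : ∀ l, r l ∈ U := fun l => (E l).1.2
  refine ⟨r, hrU, ?_⟩
  have hmpos : 0 < m := Nat.pos_of_mul_pos_left (hm ▸ Nat.factorial_pos K)
  let d : Finset (Fin K) → ℚ := fun T => (T ∩ U).card * ((T ∩ U).card - 1)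
  have hd : ∀ T, 0 ≤ d T := by
    intro T
    simp only [d]
    rcases Nat.eq_zero_or_pos (T ∩ U).card with h | h
    · simp [h]
    · have : (1 : ℚ) ≤ (T ∩ U).card := by exact_mod_cast h
      exact mul_nonneg (by positivity) (by linarith)
  have hall := exists_injective_of_weights
    (fun s : Slot U r => (Finset.univ.filter fun c : KeySym K => r s.1.1 ∈ c.1 ∧ s.1.2 ∈ c.1))
    -- the weight of a symbol with fewer than two owners in `U` is the junk value `1 / 0 = 0`
    (fun c => 1 / (m * d c.1)) (fun c => by have := hd c.1; positivity) ?_ ?_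
  · obtain ⟨c, hc, hct⟩ := hall
    exact ⟨c, hc, fun s => by simpa using hct s⟩
  · rintro ⟨⟨l, v⟩, hv, hvr⟩
    refine le_of_eq ?_
    dsimp only at hv hvr ⊢
    have h := sum_mult_div U (hrU l) hv (Ne.symm hvr)
    rw [Finset.sum_filter, Fintype.sum_sigma]
    rw [Finset.sum_filter] at h
    have h2 : ∀ T : Finset (Fin K),
        (∑ _i : Fin (mult K T.card), if r l ∈ T ∧ v ∈ T then 1 / (m * d T) else 0)
          = (if r l ∈ T ∧ v ∈ T then (mult K T.card : ℚ) / d T else 0) * (1 / m) := by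
      intro T
      split_ifs
      · simp; ring
      · simp
    rw [Finset.sum_congr rfl fun T _ => h2 T, ← Finset.sum_mul, h, hm]
    have : (m : ℚ) ≠ 0 := by positivity
    have : (U.card : ℚ) ≠ 0 := by positivity
    push_cast
    field_simp
  · rintro ⟨T, i⟩
    have hcount : (Finset.univ.filter fun s : Slot U r => r s.1.1 ∈ T ∧ s.1.2 ∈ T).card
        = m * (T ∩ U).offDiag.card := by
      rw [mul_comm, ← Finset.card_fin m, ← Finset.card_product]
      refine Finset.card_bij' (fun s _ => ((r s.1.1, s.1.2), (E s.1.1).2))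
        (fun p hp => ⟨(E.symm (⟨p.1.1, ?_⟩, p.2), p.1.2), ?_, ?_⟩) ?_ ?_ ?_ ?_
      · have h := (Finset.mem_product.1 hp).1
        simp only [Finset.mem_offDiag, Finset.mem_inter] at h
        exact h.1.2
      · have h := (Finset.mem_product.1 hp).1
        simp only [Finset.mem_offDiag, Finset.mem_inter] at h
        exact h.2.1.2
      · have h := (Finset.mem_product.1 hp).1
        simp only [Finset.mem_offDiag, Finset.mem_inter] at h
        simpa [hr] using Ne.symm h.2.2
      · rintro ⟨⟨l, v⟩, hv, hvr⟩ h
        simp only [Finset.mem_filter, Finset.mem_univ, true_and] at h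
        simp only [Finset.mem_product, Finset.mem_offDiag, Finset.mem_inter, Finset.mem_univ,
          and_true]
        exact ⟨⟨h.1, hrU l⟩, ⟨h.2, hv⟩, Ne.symm hvr⟩
      · intro p hp
        have h := (Finset.mem_product.1 hp).1
        simp only [Finset.mem_offDiag, Finset.mem_inter] at h
        simpa [hr] using ⟨h.1.1, h.2.1.1⟩
      · rintro ⟨⟨l, v⟩, hv, hvr⟩ h
        simp [hr]
      · rintro ⟨⟨x, y⟩, j⟩ hp
        simp [hr]
    simp only [Finset.mem_filter, Finset.mem_univ, true_and]
    rw [Finset.sum_const, hcount, Finset.offDiag_card, nsmul_eq_mul, Nat.cast_mul,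
      Nat.cast_sub (Nat.le_mul_self _)]
    have e : (((T ∩ U).card * (T ∩ U).card : ℕ) : ℚ) - (T ∩ U).card = d T := by
      simp only [d]; push_cast; ring
    rw [e, mul_one_div]
    exact div_self_le_one _

/-! ### The masks -/

/-- The masks for a set `U` of users. Each slot `(l, v)` carries its key symbol with sign `+1`
in coordinate `l` of the mask of `v` and `-1` in coordinate `l` of the mask of the root `r l`.
Both users know the symbol, the masks sum to zero, and since the symbols of different slots are
distinct, the masks of the non-root users can be prescribed freely in every coordinate. -/
lemma exists_noise (K : ℕ) (F : Type*) [Field F] (U : Finset (Fin K)) :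
    ∃ S : Fin K → (KeySym K → F) →+ (Fin K.factorial → F),
      (∀ k ∈ U, ∀ a a' : KeySym K → F, (∀ c : KeySym K, k ∈ c.1 → a c = a' c) → S k a = S k a') ∧
      (∀ a, ∑ k ∈ U, S k a = 0) ∧
      ∀ y : Fin K → Fin K.factorial → F, ∑ k ∈ U, y k = 0 → ∃ a, ∀ k ∈ U, S k a = y k := by
  classical
  rcases U.eq_empty_or_nonempty with rfl | hU
  · exact ⟨fun _ => 0, by simp, by simp, fun y _ => ⟨0, by simp⟩⟩
  obtain ⟨r, hrU, c, hc, hcT⟩ := exists_slots U hU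
  let S : Fin K → (KeySym K → F) →+ (Fin K.factorial → F) := fun k =>
    { toFun := fun a l => ∑ s : Slot U r with s.1.1 = l,
        ((if s.1.2 = k then 1 else 0) - (if r l = k then 1 else 0)) * a (c s)
      map_zero' := by ext l; simp
      map_add' := fun a b => by
        ext l
        simp only [Pi.add_apply, mul_add, Finset.sum_add_distrib] }
  have hS : ∀ k a l, S k a l = ∑ s : Slot U r with s.1.1 = l,
        ((if s.1.2 = k then 1 else 0) - (if r l = k then 1 else 0)) * a (c s) :=
    fun _ _ _ => rfl
  have hzero : ∀ a, ∑ k ∈ U, S k a = 0 := by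
    intro a
    ext l
    simp only [Finset.sum_apply, hS, Pi.zero_apply]
    rw [Finset.sum_comm]
    refine Finset.sum_eq_zero fun s _ => ?_
    rw [← Finset.sum_mul, Finset.sum_sub_distrib, Finset.sum_ite_eq, Finset.sum_ite_eq,
      if_pos s.2.1, if_pos (hrU l), sub_self, zero_mul]
  refine ⟨S, ?_, hzero, ?_⟩
  · intro k _ a a' h
    ext l
    rw [hS, hS]
    refine Finset.sum_congr rfl fun s hs => ?_
    have hl : s.1.1 = l := by simpa using hs
    by_cases h1 : s.1.2 = k
    · rw [h (c s) (h1 ▸ (hcT s).2)]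
    by_cases h2 : r l = k
    · rw [h (c s) (h2 ▸ hl ▸ (hcT s).1)]
    simp [h1, h2]
  · intro y hy
    refine ⟨Function.extend c (fun s => y s.1.2 s.1.1) 0, ?_⟩
    set a : KeySym K → F := Function.extend c (fun s => y s.1.2 s.1.1) 0 with ha
    have hac : ∀ s, a (c s) = y s.1.2 s.1.1 := fun s => hc.extend_apply _ _ s
    have hne : ∀ k ∈ U, ∀ l, k ≠ r l → S k a l = y k l := by
      intro k hk l hkl
      rw [hS, Finset.sum_eq_single (⟨(l, k), hk, hkl⟩ : Slot U r)]
      · simp [hac, Ne.symm hkl]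
      · rintro ⟨⟨l', k'⟩, h1, h2⟩ hs hne
        have hl : l' = l := by simpa using hs
        subst hl
        have : k' ≠ k := fun h => hne (by subst h; rfl)
        simp [this, Ne.symm hkl]
      · simp
    intro k hk
    ext l
    by_cases hkl : k = r l
    · have h1 := congrFun (hzero a) l
      have h2 := congrFun hy l
      rw [Finset.sum_apply, ← Finset.add_sum_erase U _ hk] at h1 h2
      -- the root's coordinate is forced, both tuples having sum zero
      rw [Finset.sum_congr rfl fun j hj => hne j (Finset.mem_of_mem_erase hj) l
        (hkl ▸ Finset.ne_of_mem_erase hj)] at h1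
      exact add_right_cancel (h1.trans h2.symm)
    · exact hne k hk l hkl

/-! ### Probabilities and entropies of homomorphisms on a uniform finite group -/

lemma probOf_unif {N : ℕ} {G S : Type*} [Fintype G] [DecidableEq S] (e : Fin N ≃ G) (f : G → S)
    (s : S) :
    probOf (fun _ : Fin N => (N : ℝ)⁻¹) (fun ω => f (e ω)) s
      = (Finset.univ.filter fun g => f g = s).card / Fintype.card G := by
  classical
  have hN : N = Fintype.card G := by simpa using Fintype.card_congr e
  rw [probOf, Finset.sum_const, nsmul_eq_mul, ← hN, div_eq_mul_inv]
  congr 2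
  refine Finset.card_bij' (fun ω _ => e ω) (fun g _ => e.symm g) ?_ ?_ ?_ ?_ <;> simp

/-- A surjective homomorphism maps the uniform distribution to the uniform distribution. -/
lemma probOf_hom {N : ℕ} {G M : Type*} [AddCommGroup G] [Fintype G] [AddCommGroup M] [Fintype M]
    (e : Fin N ≃ G) (ψ : G →+ M) (hψ : Function.Surjective ψ) (m : M) :
    probOf (fun _ : Fin N => (N : ℝ)⁻¹) (fun ω => ψ (e ω)) m = (Fintype.card M : ℝ)⁻¹ := by
  classical
  rw [probOf_unif e ψ m]
  have h1 : Fintype.card G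
      = Fintype.card M * (Finset.univ.filter fun g => ψ g = m).card := by
    rw [← Finset.card_univ, Finset.card_eq_sum_card_fiberwise (f := ψ) (t := Finset.univ) (by simp),
      Finset.sum_congr rfl fun x _ => AddMonoidHom.card_fiber_eq_of_mem_range ψ (hψ x) (hψ m)]
    simp
  have h2 : (Finset.univ.filter fun g => ψ g = m).card ≠ 0 := by
    obtain ⟨g, hg⟩ := hψ m
    exact Finset.card_ne_zero_of_mem (a := g) (by simpa using hg)
  have h3 : Fintype.card M ≠ 0 := Fintype.card_ne_zero
  rw [h1]
  push_cast
  field_simp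

/-- Under the uniform distribution, an injective relabelling of a surjective homomorphism onto
`M` has entropy `log |M|`. All entropies of the scheme are computed by this lemma. -/
lemma Hent_hom {N : ℕ} {G M S : Type*} [AddCommGroup G] [Fintype G] [AddCommGroup M] [Fintype M]
    [Fintype S] (e : Fin N ≃ G) (ψ : G →+ M) (hψ : Function.Surjective ψ) (ι : M → S)
    (hι : Function.Injective ι) :
    Hent (fun _ : Fin N => (N : ℝ)⁻¹) (fun ω => ι (ψ (e ω))) = Real.logb 2 (Fintype.card M) := by
  classical
  have h0 : ∀ s, s ∉ Set.range ι →
      probOf (fun _ : Fin N => (N : ℝ)⁻¹) (fun ω => ι (ψ (e ω))) s = 0 := by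
    intro s hs
    rw [probOf, Finset.filter_false_of_mem, Finset.sum_empty]
    intro ω _ h
    exact hs ⟨_, h⟩
  have h1 : ∀ m, probOf (fun _ : Fin N => (N : ℝ)⁻¹) (fun ω => ι (ψ (e ω))) (ι m)
      = (Fintype.card M : ℝ)⁻¹ := by
    intro m
    rw [← probOf_hom e ψ hψ m]
    simp only [probOf, hι.eq_iff]
  have h2 : (Fintype.card M : ℝ) ≠ 0 := by exact_mod_cast Fintype.card_ne_zero
  rw [Hent, ← Fintype.sum_of_injective ι hι (fun _ => (Fintype.card M : ℝ)⁻¹ *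
    Real.logb 2 (Fintype.card M : ℝ)⁻¹) _ (fun s hs => by rw [h0 s hs, zero_mul])
    (fun m => by rw [h1 m])]
  rw [Finset.sum_const, Finset.card_univ, nsmul_eq_mul, Real.logb_inv]
  field_simp

lemma Hent_const {N : ℕ} {G S : Type*} [AddCommGroup G] [Fintype G] [Fintype S] (e : Fin N ≃ G)
    {f : Fin N → S} {t : S} (hf : ∀ ω, f ω = t) : Hent (fun _ : Fin N => (N : ℝ)⁻¹) f = 0 := by
  have h := Hent_hom e (0 : G →+ PUnit.{1}) (fun _ => ⟨0, rfl⟩) (fun _ => t) fun _ _ _ => rfl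
  rw [funext hf]
  simpa using h

lemma probOf_prod {N : ℕ} {A B S T : Type*} [Fintype A] [Fintype B] (e : Fin N ≃ A × B)
    [Nonempty A] [Nonempty B] (f : A → S) (g : B → T) (s : S) (t : T) :
    probOf (fun _ : Fin N => (N : ℝ)⁻¹) (fun ω => (f (e ω).1, g (e ω).2)) (s, t)
      = probOf (fun _ : Fin N => (N : ℝ)⁻¹) (fun ω => f (e ω).1) s
        * probOf (fun _ : Fin N => (N : ℝ)⁻¹) (fun ω => g (e ω).2) t := by
  classical
  rw [probOf_unif e (fun p => (f p.1, g p.2)), probOf_unif e (fun p => f p.1),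
    probOf_unif e (fun p => g p.2)]
  have h1 : (Finset.univ.filter fun p : A × B => (f p.1, g p.2) = (s, t))
      = (Finset.univ.filter fun a => f a = s) ×ˢ (Finset.univ.filter fun b => g b = t) := by
    ext; simp
  have h2 : (Finset.univ.filter fun p : A × B => f p.1 = s)
      = (Finset.univ.filter fun a => f a = s) ×ˢ Finset.univ := by
    ext; simp
  have h3 : (Finset.univ.filter fun p : A × B => g p.2 = t)
      = Finset.univ ×ˢ (Finset.univ.filter fun b => g b = t) := by
    ext; simp
  rw [h1, h2, h3, Finset.card_product, Finset.card_product, Finset.card_product,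
    Fintype.card_prod, Finset.card_univ, Finset.card_univ]
  have hA : (Fintype.card A : ℝ) ≠ 0 := by exact_mod_cast Fintype.card_ne_zero
  have hB : (Fintype.card B : ℝ) ≠ 0 := by exact_mod_cast Fintype.card_ne_zero
  push_cast
  field_simp

/-! ### Correctness and security of additive masking -/

section Scheme

variable {N K : ℕ} {V A : Type*} [AddCommGroup V] [AddCommGroup A]

/-- The tuple of messages `W_k + S_k`, `k ∈ U`, as a homomorphism in the pair
(inputs, key randomness), where the masks `S k` are homomorphisms in the key randomness. -/
def messageHom (S : Fin K → A →+ V) (U : Finset (Fin K)) : (Fin K → V) × A →+ (↥U → V) where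
  toFun g k := g.1 k + S k g.2
  map_zero' := by ext; simp
  map_add' g h := by
    ext k
    simp only [Prod.fst_add, Prod.snd_add, Pi.add_apply, map_add]
    abel

lemma messageHom_surjective (S : Fin K → A →+ V) (U : Finset (Fin K)) :
    Function.Surjective (messageHom S U) := by
  classical
  intro x
  refine ⟨(fun k => if h : k ∈ U then x ⟨k, h⟩ else 0, 0), ?_⟩
  ext k
  simp [messageHom]

lemma sum_eq_sum_message (S : Fin K → A →+ V) (U : Finset (Fin K))
    (hzero : ∀ a, ∑ k ∈ U, S k a = 0) (g : (Fin K → V) × A) :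
    ∑ k ∈ U, g.1 k = ∑ k, messageHom S U g k := by
  calc ∑ k ∈ U, g.1 k = ∑ k ∈ U, (g.1 k + S k g.2) := by
        rw [Finset.sum_add_distrib, hzero, add_zero]
    _ = _ := (Finset.sum_coe_sort U fun k => g.1 k + S k g.2).symm

variable [Fintype V] [Fintype A]

/-- The masks cancel in the sum of the messages, so the messages determine the sum of the
inputs: the pair (sum, messages) is an injective image of the messages. -/
lemma scheme_correct (e : Fin N ≃ (Fin K → V) × A) (S : Fin K → A →+ V) (U : Finset (Fin K))
    (hzero : ∀ a, ∑ k ∈ U, S k a = 0) :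
    Hcond (fun _ : Fin N => (N : ℝ)⁻¹) (fun ω => ∑ k ∈ U, (e ω).1 k)
      (fun ω (k : ↥U) => (e ω).1 k + S k (e ω).2) = 0 := by
  have h1 := Hent_hom e (messageHom S U) (messageHom_surjective S U)
    (fun x => (∑ k, x k, x)) (fun x y h => (Prod.ext_iff.1 h).2)
  have h2 := Hent_hom e (messageHom S U) (messageHom_surjective S U) id Function.injective_id
  simp only [← sum_eq_sum_message S U hzero] at h1
  exact sub_eq_zero.2 (h1.trans h2.symm)

/-- The sum of the entries of a tuple indexed by `U`; its kernel is the group of zero-sum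
tuples, in which the masks of the users in `U` take their values. -/
def sumHom (V : Type*) [AddCommGroup V] (U : Finset (Fin K)) : (↥U → V) →+ V where
  toFun x := ∑ k, x k
  map_zero' := by simp
  map_add' x y := by simp [Finset.sum_add_distrib]

lemma sumHom_surjective (V : Type*) [AddCommGroup V] {U : Finset (Fin K)} (hU : U.Nonempty) :
    Function.Surjective (sumHom V U) := by
  classical
  obtain ⟨k, hk⟩ := hU
  exact fun v => ⟨Pi.single ⟨k, hk⟩ v, by simp [sumHom]⟩

/-- The inputs of the users in `U` together with their masks, as a zero-sum tuple. -/
def noiseHom (S : Fin K → A →+ V) (U : Finset (Fin K)) (hzero : ∀ a, ∑ k ∈ U, S k a = 0) :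
    (Fin K → V) × A →+ (↥U → V) × (sumHom V U).ker where
  toFun g := (fun k => g.1 k, ⟨fun k => S k g.2, by
    rw [AddMonoidHom.mem_ker]
    exact (Finset.sum_coe_sort U fun k => S k g.2).trans (hzero g.2)⟩)
  map_zero' := by ext <;> simp
  map_add' g h := by ext <;> simp

/-- If the masks range over all zero-sum tuples, nothing beyond the sum leaks. Writing `u` for
the number of users in `U` and `v = log |V|`, for nonempty `U` the four entropies in the
conditional mutual information are `uv`, `v`, `uv + (u - 1)v` and `uv`, each being the entropy of
a surjective homomorphism up to an injective relabelling. -/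
lemma scheme_secure (e : Fin N ≃ (Fin K → V) × A) (S : Fin K → A →+ V) (U : Finset (Fin K))
    (hzero : ∀ a, ∑ k ∈ U, S k a = 0)
    (hsurj : ∀ y : Fin K → V, ∑ k ∈ U, y k = 0 → ∃ a, ∀ k ∈ U, S k a = y k) :
    CMI (fun _ : Fin N => (N : ℝ)⁻¹) (fun ω (k : ↥U) => (e ω).1 k)
      (fun ω (k : ↥U) => (e ω).1 k + S k (e ω).2) (fun ω => ∑ k ∈ U, (e ω).1 k) = 0 := by
  classical
  rcases U.eq_empty_or_nonempty with rfl | hU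
  · have hsub (x : ↥(∅ : Finset (Fin K)) → V) : x = 0 := Subsingleton.elim _ _
    have h1 := Hent_const e (t := ((0 : ↥(∅ : Finset (Fin K)) → V), (0 : V)))
      (f := fun ω => (fun k : ↥(∅ : Finset (Fin K)) => (e ω).1 k,
        ∑ k ∈ (∅ : Finset (Fin K)), (e ω).1 k))
      fun ω => Prod.ext (hsub _) rfl
    have h2 := Hent_const e (t := (0 : V))
      (f := fun ω => ∑ k ∈ (∅ : Finset (Fin K)), (e ω).1 k) fun ω => rfl
    have h3 := Hent_const e (t := ((0 : ↥(∅ : Finset (Fin K)) → V),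
        ((0 : ↥(∅ : Finset (Fin K)) → V), (0 : V))))
      (f := fun ω => (fun k : ↥(∅ : Finset (Fin K)) => (e ω).1 k,
        (fun k : ↥(∅ : Finset (Fin K)) => (e ω).1 k + S k (e ω).2,
          ∑ k ∈ (∅ : Finset (Fin K)), (e ω).1 k)))
      fun ω => Prod.ext (hsub _) (Prod.ext (hsub _) rfl)
    have h4 := Hent_const e (t := ((0 : ↥(∅ : Finset (Fin K)) → V), (0 : V)))
      (f := fun ω => (fun k : ↥(∅ : Finset (Fin K)) => (e ω).1 k + S k (e ω).2,
        ∑ k ∈ (∅ : Finset (Fin K)), (e ω).1 k))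
      fun ω => Prod.ext (hsub _) rfl
    rw [CMI, Hcond, Hcond, h1, h2, h3, h4]
    simp
  have hσ := sumHom_surjective V hU
  -- with zero masks the messages are the inputs themselves
  have hfst : Function.Surjective (messageHom (0 : Fin K → A →+ V) U) :=
    messageHom_surjective _ U
  have hpair : Function.Surjective (noiseHom S U hzero) := by
    rintro ⟨w, s, hs⟩
    have hy : ∑ k ∈ U, (if h : k ∈ U then s ⟨k, h⟩ else 0) = 0 := by
      rw [← Finset.sum_coe_sort]
      simpa [sumHom] using hs
    obtain ⟨a, ha⟩ := hsurj (fun k => if h : k ∈ U then s ⟨k, h⟩ else 0) hy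
    refine ⟨(fun k => if h : k ∈ U then w ⟨k, h⟩ else 0, a), ?_⟩
    refine Prod.ext ?_ (Subtype.ext ?_)
    · ext k; simp [noiseHom]
    · ext k; simp [noiseHom, ha k k.2]
  have hWsum : Hent (fun _ : Fin N => (N : ℝ)⁻¹)
      (fun ω => ((fun k : ↥U => (e ω).1 k), ∑ k ∈ U, (e ω).1 k))
      = Real.logb 2 (Fintype.card (↥U → V)) := by
    rw [← Hent_hom e _ hfst (fun x => (x, ∑ k, x k)) (fun x y h => (Prod.ext_iff.1 h).1)]
    simp only [← sum_eq_sum_message (0 : Fin K → A →+ V) U (by simp)]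
    simp [messageHom]
  have hsum : Hent (fun _ : Fin N => (N : ℝ)⁻¹) (fun ω => ∑ k ∈ U, (e ω).1 k)
      = Real.logb 2 (Fintype.card V) := by
    rw [← Hent_hom e ((sumHom V U).comp (messageHom 0 U)) (hσ.comp hfst) id
      Function.injective_id]
    simp only [sum_eq_sum_message (0 : Fin K → A →+ V) U (by simp)]
    rfl
  have hXsum : Hent (fun _ : Fin N => (N : ℝ)⁻¹)
      (fun ω => ((fun k : ↥U => (e ω).1 k + S k (e ω).2), ∑ k ∈ U, (e ω).1 k))
      = Real.logb 2 (Fintype.card (↥U → V)) := by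
    rw [← Hent_hom e _ (messageHom_surjective S U) (fun x => (x, ∑ k, x k))
      (fun x y h => (Prod.ext_iff.1 h).1)]
    simp only [← sum_eq_sum_message S U hzero]
    rfl
  have hall : Hent (fun _ : Fin N => (N : ℝ)⁻¹)
      (fun ω => ((fun k : ↥U => (e ω).1 k),
        ((fun k : ↥U => (e ω).1 k + S k (e ω).2), ∑ k ∈ U, (e ω).1 k)))
      = Real.logb 2 (Fintype.card ((↥U → V) × (sumHom V U).ker)) := by
    rw [← Hent_hom e _ hpair (fun p => (p.1, (p.1 + p.2.1, ∑ k, p.1 k))) ?_]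
    · congr 1
      ext ω : 1
      refine Prod.ext rfl (Prod.ext rfl ?_)
      exact (Finset.sum_coe_sort U fun k => (e ω).1 k).symm
    · rintro ⟨w, s⟩ ⟨w', s'⟩ h
      simp only [Prod.mk.injEq] at h
      obtain ⟨rfl, h, -⟩ := h
      exact Prod.ext rfl (Subtype.ext (add_left_cancel h))
  have hcard : Fintype.card (↥U → V) = Fintype.card V * Fintype.card (sumHom V U).ker := by
    have h := AddSubgroup.card_eq_card_quotient_mul_card_addSubgroup (sumHom V U).ker
    rw [Nat.card_congr (QuotientAddGroup.quotientKerEquivOfSurjective _ hσ).toEquiv] at h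
    simpa only [Nat.card_eq_fintype_card] using h
  have hV : (Fintype.card V : ℝ) ≠ 0 := by exact_mod_cast Fintype.card_ne_zero
  have hk : (Fintype.card (sumHom V U).ker : ℝ) ≠ 0 := by exact_mod_cast Fintype.card_ne_zero
  rw [CMI, Hcond, Hcond, hWsum, hsum, hXsum, hall, Fintype.card_prod, hcard]
  push_cast
  rw [Real.logb_mul hV hk, Real.logb_mul (mul_ne_zero hV hk) hk, Real.logb_mul hV hk]
  ring

end Scheme

/-- Achievability part of Theorem 2: for every K ≥ 2 and every prime power q (over a field
F with q elements), there is a K-user secure summation scheme with arbitrary user selection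
whose key rate is R_Z = L_Z/L = 1 + 1/2 + ⋯ + 1/(K−1). -/
theorem secure_summation_achievability
    (K q : ℕ) (hK : 2 ≤ K) (hq : IsPrimePow q)
    (F : Type) [Field F] [Fintype F] (hF : Fintype.card F = q) :
    ∃ L : ℕ, 0 < L ∧ (K - 1).factorial ∣ L ∧
      ∃ (N : ℕ) (μ : Fin N → ℝ),
        (∀ ω, 0 ≤ μ ω) ∧ (∑ ω, μ ω) = 1 ∧
        ∃ (W : Fin K → Fin N → (Fin L → F))
          (Z : Fin K → Fin N → (Fin (∑ n ∈ Finset.Icc 1 (K - 1), L / n) → F))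
          (X : ∀ (_ : Finset (Fin K)) (_ : Fin K), Fin N → (Fin L → F)),
          -- the inputs W_1, …, W_K are i.i.d. uniform over F_q^L
          (∀ w : Fin K → Fin L → F,
            probOf μ (fun ω (k : Fin K) => W k ω) w = ((q : ℝ) ^ (L * K))⁻¹) ∧
          -- the keys (Z_1,…,Z_K) are independent of the inputs (W_1,…,W_K)
          (∀ (w : Fin K → Fin L → F)
              (z : Fin K → Fin (∑ n ∈ Finset.Icc 1 (K - 1), L / n) → F),
            probOf μ (fun ω => ((fun k : Fin K => W k ω), (fun k : Fin K => Z k ω))) (w, z)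
              = probOf μ (fun ω (k : Fin K) => W k ω) w
                  * probOf μ (fun ω (k : Fin K) => Z k ω) z) ∧
          -- each message X_k^U is a deterministic function of (W_k, Z_k)
          (∀ (U : Finset (Fin K)) (k : Fin K), k ∈ U →
            ∃ f : (Fin L → F) → (Fin (∑ n ∈ Finset.Icc 1 (K - 1), L / n) → F) →
                (Fin L → F), ∀ ω, X U k ω = f (W k ω) (Z k ω)) ∧
          -- correctness: H(Σ_{k∈U} W_k | (X_k^U)_{k∈U}) = 0 for every U
          (∀ U : Finset (Fin K),
            Hcond μ (fun ω => ∑ k ∈ U, W k ω) (fun ω (k : ↥U) => X U k.1 ω) = 0) ∧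
          -- security: I((W_k)_{k∈U}; (X_k^U)_{k∈U} | Σ_{k∈U} W_k) = 0 for every U
          (∀ U : Finset (Fin K),
            CMI μ (fun ω (k : ↥U) => W k.1 ω) (fun ω (k : ↥U) => X U k.1 ω)
              (fun ω => ∑ k ∈ U, W k ω) = 0) ∧
          -- consequently the key rate is R_Z = L_Z/L = 1 + 1/2 + ⋯ + 1/(K−1)
          ((∑ n ∈ Finset.Icc 1 (K - 1), L / n : ℕ) : ℝ) / (L : ℝ)
            = ∑ n ∈ Finset.Icc 1 (K - 1), 1 / (n : ℝ) := by
  classical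
  have hKf : 0 < K.factorial := Nat.factorial_pos K
  refine ⟨K.factorial, hKf, Nat.factorial_dvd_factorial (Nat.sub_le K 1), ?_⟩
  choose S hdep hzero hsurj using exists_noise K F
  let e := (Fintype.equivFin ((Fin K → Fin K.factorial → F) × (KeySym K → F))).symm
  -- the key of user `k` lists the symbols `a_T` with `k ∈ T`
  have hkey (k : Fin K) : Nonempty (Fin (∑ n ∈ Finset.Icc 1 (K - 1), K.factorial / n) ≃
      Σ T : {T : Finset (Fin K) // k ∈ T}, Fin (mult K T.1.card)) :=
    ⟨Fintype.equivOfCardEq (by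
      rw [Fintype.card_fin, Fintype.card_sigma, ← sum_mult_mem K k]
      simp only [Fintype.card_fin])⟩
  have ek := fun k => (hkey k).some
  refine ⟨_, fun _ => (Fintype.card ((Fin K → Fin K.factorial → F) × (KeySym K → F)) : ℝ)⁻¹,
    fun _ => by positivity, ?_, fun k ω => (e ω).1 k,
    fun k ω i => (e ω).2 ⟨(ek k i).1.1, (ek k i).2⟩,
    fun U k ω => (e ω).1 k + S U k (e ω).2, ?_, ?_, ?_, ?_, ?_, ?_⟩
  · rw [Finset.sum_const, Finset.card_univ, Fintype.card_fin, nsmul_eq_mul]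
    exact mul_inv_cancel₀ (by exact_mod_cast Fintype.card_ne_zero)
  · intro w
    have h := probOf_hom e (AddMonoidHom.fst _ _) (fun w => ⟨(w, 0), rfl⟩) w
    refine h.trans ?_
    simp [hF, pow_mul]
  · intro w z
    exact probOf_prod e (fun w => w)
      (fun a k i => a ⟨(ek k i).1.1, (ek k i).2⟩) w z
  · intro U k hk
    refine ⟨fun w z => w + S U k fun c =>
      if h : k ∈ c.1 then z ((ek k).symm ⟨⟨c.1, h⟩, c.2⟩) else 0, fun ω => ?_⟩
    refine congrArg _ (hdep U k hk _ _ fun c hc => ?_)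
    dsimp only
    rw [dif_pos hc, Equiv.apply_symm_apply]
  · exact fun U => scheme_correct e (S U) U (hzero U)
  · exact fun U => scheme_secure e (S U) U (hzero U) (hsurj U)
  · have hL : (K.factorial : ℝ) ≠ 0 := by positivity
    rw [Nat.cast_sum, Finset.sum_div]
    refine Finset.sum_congr rfl fun n hn => ?_
    have hn := Finset.mem_Icc.1 hn
    have hn0 : (n : ℝ) ≠ 0 := by exact_mod_cast (by omega : n ≠ 0)
    rw [Nat.cast_div (Nat.dvd_factorial (by omega) (by omega)) hn0]
    field_simp
end

section
/- Let K ≥ 1, let q be a prime power, and suppose matrices H_k^n ∈ F_q^{(K!/n) × K!} (k, n ∈ [K]) and V_k^{n←m} ∈ F_q^{(K!/n) × (K!/m)} (k ∈ [K], 1 ≤ m < n ≤ K) are such that for every n ∈ [K] and every subset U = {k_1,…,k_n} ⊆ [K] of size n, the K!×K! matrices obtained by vertically stacking (V_{k_i}^{n←m}H_{k_i}^{m})_{i∈[n]} for each m ∈ [n−1], and by vertically stacking (H_{k_i}^{n})_{i∈[n]}, are all invertible. Let S^1, …, S^K be i.i.d. uniform random vectors in F_q^{K!}, and define for each k, n ∈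 [K] the random variable Z_k^n = ((V_k^{n←m}H_k^{m}S^m)_{m∈[n−1]}, H_k^{n}S^n). Then for every n ∈ [K] the family (Z_1^n, …, Z_K^n) is (K,n)-MDS with symbol size L = K!·log₂ q, i.e., H((Z_k^n)_{k∈U}) = min(|U|, n)·K!·log₂ q for every subset U ⊆ [K]. -/
open scoped BigOperators

/-- The MDS variable `Z_k^n = ((V_k^{n←m} H_k^m S^m)_{m∈[n−1]}, H_k^n S^n)` built from the
matrices `H`, `V` and the seeds `S` (level `n : Fin K` represents `n+1 ∈ [K]`). -/
def ZMdef {K : ℕ} {F : Type*} [Field F] {Ω : Type*}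
    (H : (k : Fin K) → (n : Fin K) →
      Matrix (Fin (K.factorial / (n.1 + 1))) (Fin K.factorial) F)
    (V : (k : Fin K) → (n : Fin K) → (m : Fin K) →
      Matrix (Fin (K.factorial / (n.1 + 1))) (Fin (K.factorial / (m.1 + 1))) F)
    (S : Fin K → Ω → (Fin K.factorial → F)) (n k : Fin K) :
    Ω → ((Fin n.1 → (Fin (K.factorial / (n.1 + 1)) → F))
          × (Fin (K.factorial / (n.1 + 1)) → F)) :=
  fun ω =>
    ((fun j : Fin n.1 =>
        (V k n (Fin.castLE n.isLt.le j) * H k (Fin.castLE n.isLt.le j)).mulVec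
          (S (Fin.castLE n.isLt.le j) ω)),
     (H k n).mulVec (S n ω))

/-!
Fix a level `n` (standing for `n + 1 ∈ [K]`), put `N = K!` and `d = N / (n + 1)`. The variables
`Z_k^n` only involve the seeds of the first `n + 1` levels, and the tuple `Y` of these seeds is
uniform. On level `i`, user `k` sees `W k i *ᵥ Y i`, where `W k i` is `V_k^{n←i} H_k^i` below the
top level and `H_k^n` on the top level. The rank hypothesis says that, on every level, stacking
the blocks of any `n + 1` distinct users gives an invertible `N × N` matrix.

Hence the linear map `stackMap W U` sending `Y` to the observations of the users in `U` is
surjective if `|U| ≤ n + 1` (complete `U` to `n + 1` users) and injective if `|U| ≥ n + 1`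
(keep `n + 1` of the users). A surjective homomorphism preserves uniformity
(`probOf_comp_of_surjective`), which gives entropy `log₂ (q ^ (d * (n + 1) * |U|))` in the first
case; an injective map preserves entropy (`Hent_comp_of_injective`), which gives
`log₂ (q ^ (N * (n + 1)))` in the second.
-/

/-- The law of `f ∘ X` is the push-forward of the law of `X`. -/
lemma probOf_comp {Ω S T : Type*} [Fintype Ω] [Fintype S] [DecidableEq T] (μ : Ω → ℝ)
    (X : Ω → S) (f : S → T) (t : T) :
    probOf μ (fun ω => f (X ω)) t = ∑ s with f s = t, probOf μ X s := by
  classical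
  unfold probOf
  rw [Finset.sum_filter, ← Finset.sum_fiberwise (s := Finset.univ) (g := X), Finset.sum_filter]
  refine Finset.sum_congr rfl fun s _ => ?_
  split_ifs with h
  · refine Finset.sum_congr (by ext; simp) fun ω hω => ?_
    simp only [Finset.mem_filter] at hω
    simp [hω.2, h]
  · refine Finset.sum_eq_zero fun ω hω => ?_
    simp only [Finset.mem_filter] at hω
    simp [hω.2, h]

/-- A surjective homomorphism sends a uniform variable to a uniform variable, since all its fibres
are cosets of the kernel. -/
lemma probOf_comp_of_surjective {Ω G G' : Type*} [Fintype Ω] [Fintype G] [Fintype G']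
    [AddGroup G] [AddGroup G'] (μ : Ω → ℝ) (X : Ω → G)
    (hX : ∀ g, probOf μ X g = (Fintype.card G : ℝ)⁻¹)
    (φ : G →+ G') (hφ : Function.Surjective φ) (t : G') :
    probOf μ (fun ω => φ (X ω)) t = (Fintype.card G' : ℝ)⁻¹ := by
  classical
  have hfib (t : G') : ({g | φ g = t} : Finset G).card = ({g | φ g = 0} : Finset G).card := by
    obtain ⟨g₀, rfl⟩ := hφ t
    refine Finset.card_bij' (fun g _ => g - g₀) (fun g _ => g + g₀) ?_ ?_ ?_ ?_ <;>
      simp +contextual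
  have hcard : Fintype.card G = Fintype.card G' * ({g | φ g = 0} : Finset G).card := by
    rw [← Finset.card_univ, Finset.card_eq_sum_card_fiberwise (f := φ) (t := Finset.univ)
      (by simp)]
    simp [hfib]
  have hG : (Fintype.card G : ℝ) ≠ 0 := by exact_mod_cast Fintype.card_ne_zero
  rw [probOf_comp]
  simp only [hX, Finset.sum_const, nsmul_eq_mul, hfib]
  rw [hcard] at hG ⊢
  push_cast at hG ⊢
  field_simp [left_ne_zero_of_mul hG, right_ne_zero_of_mul hG]

/-- An injective function of a uniform variable has maximal entropy: relabelling the values does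
not change the entropy. -/
lemma Hent_comp_of_injective {Ω S T : Type*} [Fintype Ω] [Fintype S] [Fintype T] [Nonempty S]
    (μ : Ω → ℝ) (X : Ω → S) (hX : ∀ s, probOf μ X s = (Fintype.card S : ℝ)⁻¹)
    (f : S → T) (hf : Function.Injective f) :
    Hent μ (fun ω => f (X ω)) = Real.logb 2 (Fintype.card S) := by
  classical
  have hpr (s : S) : probOf μ (fun ω => f (X ω)) (f s) = (Fintype.card S : ℝ)⁻¹ := by
    have : ({x | f x = f s} : Finset S) = {s} := by
      ext x
      simp [hf.eq_iff]
    rw [probOf_comp, this, Finset.sum_singleton, hX]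
  have hS : (Fintype.card S : ℝ) ≠ 0 := by exact_mod_cast Fintype.card_ne_zero
  unfold Hent
  rw [← Finset.sum_subset (Finset.subset_univ (Finset.univ.image f)),
    Finset.sum_image fun _ _ _ _ h => hf h]
  · simp [hpr, Real.logb_inv, hS]
  · intro t _ ht
    have : probOf μ (fun ω => f (X ω)) t = 0 := by
      rw [probOf_comp]
      refine Finset.sum_eq_zero fun s hs => absurd ?_ ht
      simp only [Finset.mem_filter] at hs
      simp [← hs.2]
    simp [this]

/-- If the square matrix obtained by stacking the blocks `A i` has full rank, then its blocks
jointly determine a bijective linear map. -/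
lemma bijective_of_stack_rank {F : Type*} [Field F] {a d N : ℕ} (hN : a * d = N)
    (A : Fin a → Matrix (Fin d) (Fin N) F)
    (h : (Matrix.of fun (p : Fin a × Fin d) (c : Fin N) => A p.1 p.2 c).rank = N) :
    Function.Bijective (fun (x : Fin N → F) i => (A i).mulVec x) := by
  set B := Matrix.of fun (p : Fin a × Fin d) (c : Fin N) => A p.1 p.2 c with hB
  have hsurj : Function.Surjective B.mulVecLin := by
    rw [← LinearMap.range_eq_top]
    apply Submodule.eq_top_of_finrank_eq
    rw [← Matrix.rank, h]
    simp [hN]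
  have hinj : Function.Injective B.mulVecLin :=
    (LinearMap.injective_iff_surjective_of_finrank_eq_finrank (by simp [hN])).2 hsurj
  have hBA (x : Fin N → F) (p : Fin a × Fin d) : B.mulVecLin x p = (A p.1).mulVec x p.2 := rfl
  refine ⟨fun x y hxy => hinj ?_, fun t => ?_⟩
  · ext p
    rw [hBA, hBA]
    exact congrFun (congrFun hxy p.1) p.2
  · obtain ⟨x, hx⟩ := hsurj fun p => t p.1 p.2
    refine ⟨x, ?_⟩
    ext i j
    exact congrFun hx (i, j)

/-- The observations of the users in `U` as a function of the seeds `x` of the first `n + 1`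
levels: user `u` sees `W u i *ᵥ x i` on each level `i`. The top level is kept in a separate
component, as in `ZMdef`. -/
def stackMap {F ι : Type*} [Field F] {n d N : ℕ}
    (W : ι → Fin (n + 1) → Matrix (Fin d) (Fin N) F) (U : Finset ι) :
    (Fin (n + 1) → Fin N → F) →+ (↥U → (Fin n → Fin d → F) × (Fin d → F)) where
  toFun x u := (fun j => (W u j.castSucc).mulVec (x j.castSucc),
    (W u (Fin.last n)).mulVec (x (Fin.last n)))
  map_zero' := by ext <;> simp
  map_add' x y := by ext <;> simp [Matrix.mulVec_add]

section StackMap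

variable {F ι : Type*} [Field F] {n d N : ℕ}
  {W : ι → Fin (n + 1) → Matrix (Fin d) (Fin N) F}

lemma stackMap_injective
    (hW : ∀ e : Fin (n + 1) → ι, Function.Injective e → ∀ i,
      Function.Bijective (fun (x : Fin N → F) a => (W (e a) i).mulVec x))
    (U : Finset ι) (hU : n + 1 ≤ U.card) : Function.Injective (stackMap W U) := by
  obtain ⟨U', hU', hc⟩ := Finset.exists_subset_card_eq hU
  let e := (Finset.equivFinOfCardEq hc).symm
  intro x y hxy
  ext1 i
  refine (hW (fun a => e a) (fun a b h => e.injective (Subtype.ext h)) i).1 ?_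
  ext1 a
  have h := congrFun hxy ⟨e a, hU' (e a).2⟩
  induction i using Fin.lastCases with
  | last => exact (Prod.ext_iff.1 h).2
  | cast j => exact congrFun (Prod.ext_iff.1 h).1 j

lemma stackMap_surjective [Fintype ι] (hι : n + 1 ≤ Fintype.card ι)
    (hW : ∀ e : Fin (n + 1) → ι, Function.Injective e → ∀ i,
      Function.Bijective (fun (x : Fin N → F) a => (W (e a) i).mulVec x))
    (U : Finset ι) (hU : U.card ≤ n + 1) : Function.Surjective (stackMap W U) := by
  classical
  obtain ⟨U', hU', hc⟩ := Finset.exists_superset_card_eq hU hι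
  let e := (Finset.equivFinOfCardEq hc).symm
  intro t
  -- the prescribed observations, extended by zero to the users of `U'` outside `U`
  let t' (k : ι) : (Fin n → Fin d → F) × (Fin d → F) := if h : k ∈ U then t ⟨k, h⟩ else 0
  have hx (i : Fin (n + 1)) :=
    (hW (fun a => e a) (fun a b h => e.injective (Subtype.ext h)) i).2
      fun a => Fin.snoc (α := fun _ => Fin d → F) (t' (e a)).1 (t' (e a)).2 i
  choose x hx using hx
  have key (u : U) (i : Fin (n + 1)) :
      (W u i).mulVec (x i) = Fin.snoc (α := fun _ => Fin d → F) (t u).1 (t u).2 i := by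
    have h := congrFun (hx i) (e.symm ⟨u, hU' u.2⟩)
    simpa [t'] using h
  refine ⟨x, ?_⟩
  ext1 u
  refine Prod.ext ?_ ?_
  · ext1 j
    simpa [stackMap] using key u j.castSucc
  · simpa [stackMap] using key u (Fin.last n)

end StackMap

/-- Correctness of the general MDS variable generation scheme: if all the stacked K!×K!
matrices are of full rank and S^1,…,S^K are i.i.d. uniform over F_q^{K!}, then for every
n ∈ [K] the variables Z_1^n, …, Z_K^n are (K,n)-MDS with symbol size L = K!·log₂ q. -/
theorem mds_scheme_is_mds
    (K q : ℕ) (hK : 1 ≤ K)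
    (F : Type) [Field F] [Fintype F] (hF : Fintype.card F = q)
    (H : (k : Fin K) → (n : Fin K) →
      Matrix (Fin (K.factorial / (n.1 + 1))) (Fin K.factorial) F)
    (V : (k : Fin K) → (n : Fin K) → (m : Fin K) →
      Matrix (Fin (K.factorial / (n.1 + 1))) (Fin (K.factorial / (m.1 + 1))) F)
    -- full-rank conditions on all the stacked matrices, for every n-subset of [K]
    (hfull : ∀ (n : Fin K) (e : Fin (n.1 + 1) → Fin K), Function.Injective e →
      (∀ m : Fin K, m < n →
        (Matrix.of fun (p : Fin (n.1 + 1) × Fin (K.factorial / (n.1 + 1)))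
            (c : Fin K.factorial) => (V (e p.1) n m * H (e p.1) m) p.2 c).rank
          = K.factorial) ∧
      (Matrix.of fun (p : Fin (n.1 + 1) × Fin (K.factorial / (n.1 + 1)))
          (c : Fin K.factorial) => H (e p.1) n p.2 c).rank = K.factorial)
    (Ω : Type) [Fintype Ω] (μ : Ω → ℝ)
    (hμ0 : ∀ ω, 0 ≤ μ ω) (hμ1 : (∑ ω, μ ω) = 1)
    (S : Fin K → Ω → (Fin K.factorial → F))
    -- S^1, …, S^K are i.i.d. uniform over F_q^{K!}
    (hS : ∀ s : Fin K → Fin K.factorial → F,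
      probOf μ (fun ω (i : Fin K) => S i ω) s = ((q : ℝ) ^ (K.factorial * K))⁻¹) :
    ∀ (n : Fin K) (U : Finset (Fin K)),
      Hent μ (fun ω (u : ↥U) => ZMdef H V S n u.1 ω)
        = (min U.card (n.1 + 1) : ℕ) * ((K.factorial : ℝ) * Real.logb 2 q) := by
  intro n U
  have hdvd : (n.1 + 1) * (K.factorial / (n.1 + 1)) = K.factorial :=
    Nat.mul_div_cancel' (Nat.dvd_factorial n.1.succ_pos n.2)
  let W (k : Fin K) : Fin (n.1 + 1) →
      Matrix (Fin (K.factorial / (n.1 + 1))) (Fin K.factorial) F :=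
    Fin.snoc (α := fun _ => Matrix (Fin (K.factorial / (n.1 + 1))) (Fin K.factorial) F)
      (fun j => V k n (Fin.castLE n.isLt.le j) * H k (Fin.castLE n.isLt.le j)) (H k n)
  have hW (e : Fin (n.1 + 1) → Fin K) (he : Function.Injective e) (i : Fin (n.1 + 1)) :
      Function.Bijective (fun (x : Fin K.factorial → F) a => (W (e a) i).mulVec x) := by
    apply bijective_of_stack_rank hdvd
    induction i using Fin.lastCases with
    | last => simpa [W] using (hfull n e he).2
    | cast j => simpa [W] using (hfull n e he).1 (Fin.castLE n.isLt.le j) j.2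
  let π : (Fin K → Fin K.factorial → F) →+ (Fin (n.1 + 1) → Fin K.factorial → F) :=
    { toFun := fun s i => s (Fin.castLE n.isLt i)
      map_zero' := rfl
      map_add' := fun _ _ => rfl }
  have hπ : Function.Surjective π := (Fin.castLE_injective n.isLt).surjective_comp_right
  have hSu (s : Fin K → Fin K.factorial → F) :
      probOf μ (fun ω (i : Fin K) => S i ω) s =
        (Fintype.card (Fin K → Fin K.factorial → F) : ℝ)⁻¹ := by
    rw [hS]
    simp [hF, pow_mul]
  have hY := probOf_comp_of_surjective μ _ hSu π hπ
  have hZ : (fun ω (u : ↥U) => ZMdef H V S n u.1 ω) =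
      fun ω => stackMap W U (π fun i => S i ω) := by
    ext1 ω
    ext1 u
    refine Prod.ext ?_ ?_
    · ext1 j
      simp [ZMdef, stackMap, W, π]
    · simp [ZMdef, stackMap, W, π]
      rfl
  rw [hZ]
  rcases le_total U.card (n.1 + 1) with hU | hU
  · have hsurj := stackMap_surjective (by simp) hW U hU
    have h := Hent_comp_of_injective μ _ (probOf_comp_of_surjective μ _ hY _ hsurj) id
      Function.injective_id
    refine h.trans ?_
    have hc : Fintype.card (↥U → (Fin n.1 → Fin (K.factorial / (n.1 + 1)) → F) ×
        (Fin (K.factorial / (n.1 + 1)) → F)) = q ^ (U.card * K.factorial) := by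
      simp only [Fintype.card_pi, Fintype.card_prod, Finset.prod_const, Finset.card_univ, hF,
        Fintype.card_fin, Fintype.card_coe]
      rw [← pow_mul, ← pow_add, ← pow_mul]
      congr 1
      conv_rhs => rw [← hdvd]
      ring
    rw [hc, min_eq_left hU, Nat.cast_pow, Real.logb_pow]
    push_cast
    ring
  · have h := Hent_comp_of_injective μ _ hY _ (stackMap_injective hW U hU)
    refine h.trans ?_
    have hc : Fintype.card (Fin (n.1 + 1) → Fin K.factorial → F) =
        q ^ ((n.1 + 1) * K.factorial) := by
      simp [hF, ← pow_mul, mul_comm]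
    rw [hc, min_eq_right hU, Nat.cast_pow, Real.logb_pow]
    push_cast
    ring
end
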